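/- Fix an integer n ≥ 1. For every q ∈ ℝ^{n+1} and every 1 ≤ l ≤ n, 𝓗_l^{(n+1)}(q₁,…,q_{n+1}) = 𝓗_l^{(n)}(q₁,…,q_n) + 4·sinh²(q_{n+1}/2)·𝓗_{l−1}^{(n)}(q₁,…,q_n); and for every 1 ≤ k ≤ n, 𝓚_k^{(n+1)}(q₁,…,q_{n+1}) = 𝓚_k^{(n)}(q₁,…,q_n) − 2·cosh(q_{n+1})·𝓚_{k−1}^{(n)}(q₁,…,q_n) + 𝓚_{k−2}^{(n)}(q₁,…,q_n), with the conventions 𝓚₀^{(n)} = 1 and 𝓚_{−1}^{(n)} = 0. -/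

import Mathlib

/-- The action-angle transform `𝓗_l^{(n)}` of van Diejen's `l`-th commuting Hamiltonian
for the rational BC_n Ruijsenaars-Schneider system: the sum runs over all pairs of a
subset `J ⊆ {1,…,n}` with `|J| ≤ l` and a sign assignment `ε : J → {±1}`. -/
noncomputable def Hfam (n l : ℕ) (q : Fin n → ℝ) : ℝ :=
  ∑ J : Finset (Fin n), ∑ ε : {x // x ∈ J} → Bool,
    if J.card ≤ l then
      (-2 : ℝ) ^ (l - J.card) * ((n - J.card).choose (l - J.card) : ℝ) *
        Real.cosh (∑ j : {x // x ∈ J}, if ε j then q j.1 else -(q j.1))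
    else 0

/-- The action-angle transform `𝓚_m^{(n)}` of the `m`-th coefficient of the
characteristic polynomial of Pusztai's Lax matrix. -/
noncomputable def Kfam (n m : ℕ) (q : Fin n → ℝ) : ℝ :=
  (-1 : ℝ) ^ m *
    ∑ a ∈ Finset.range (m / 2 + 1), ∑ J : Finset (Fin n), ∑ ε : {x // x ∈ J} → Bool,
      if J.card = m - 2 * a then
        ((n - (m - 2 * a)).choose a : ℝ) *
          Real.cosh (∑ j : {x // x ∈ J}, if ε j then q j.1 else -(q j.1))
      else 0

/-
Summing over the signs turns `cosh (q_{εJ})` into `∏_{j ∈ J} 2 cosh q_j`, so each family is the list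
of coefficients of an expanded product over `j`:
`∑_l 𝓗_l X^l = ∏_j (1 + 4 sinh² (q_j / 2) X)` and `∑_m 𝓚_m X^m = ∏_j (1 - 2 cosh q_j X + X²)`.
Both recursions compare coefficients after splitting off a single factor of the product.
-/

section SignSums

variable {ι : Type*}

theorem sum_exp_signed_sum [Fintype ι] [DecidableEq ι] (q : ι → ℝ) :
    ∑ ε : ι → Bool, Real.exp (∑ j, if ε j then q j else -q j) = ∏ j, 2 * Real.cosh (q j) := by
  have two_mul_cosh (j : ι) :
      2 * Real.cosh (q j) = ∑ b : Bool, Real.exp (if b then q j else -q j) := by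
    simp [Real.cosh_eq, mul_div_cancel₀]
  simp_rw [two_mul_cosh, Finset.prod_univ_sum, Fintype.piFinset_univ, Real.exp_sum]

theorem sum_cosh_signed_sum [Fintype ι] [DecidableEq ι] (q : ι → ℝ) :
    ∑ ε : ι → Bool, Real.cosh (∑ j, if ε j then q j else -q j) = ∏ j, 2 * Real.cosh (q j) := by
  have neg_signed_sum (ε : ι → Bool) :
      -∑ j, (if ε j then q j else -q j) = ∑ j, if ε j then -q j else -(-q j) := by
    rw [← Finset.sum_neg_distrib]
    exact Finset.sum_congr rfl fun _ _ => apply_ite Neg.neg ..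
  simp_rw [Real.cosh_eq (∑ _, _), neg_signed_sum]
  rw [← Finset.sum_div, Finset.sum_add_distrib, sum_exp_signed_sum,
    sum_exp_signed_sum fun j => -q j]
  simp only [Real.cosh_neg, add_self_div_two]

theorem sum_cosh_signed_sum_coe [DecidableEq ι] (q : ι → ℝ) (J : Finset ι) :
    ∑ ε : {x // x ∈ J} → Bool, Real.cosh (∑ j : {x // x ∈ J}, if ε j then q j.1 else -q j.1) =
      ∏ j ∈ J, 2 * Real.cosh (q j) :=
  (sum_cosh_signed_sum fun j : {x // x ∈ J} => q j).trans
    (Finset.prod_coe_sort J fun j => 2 * Real.cosh (q j))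

end SignSums

theorem sum_range_ite_eq_sub_two_mul {M : Type*} [AddCommMonoid M] (c m : ℕ) (g : ℕ → ℕ → M) :
    ∑ a ∈ Finset.range (m / 2 + 1), (if c = m - 2 * a then g (m - 2 * a) a else 0) =
      if c ≤ m ∧ 2 ∣ m - c then g c ((m - c) / 2) else 0 := by
  have eq_sub_iff {a : ℕ} (ha : a ∈ Finset.range (m / 2 + 1)) :
      c = m - 2 * a ↔ (c ≤ m ∧ 2 ∣ m - c) ∧ a = (m - c) / 2 := by
    rw [Finset.mem_range] at ha
    omega
  have half_mem : (m - c) / 2 ∈ Finset.range (m / 2 + 1) := by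
    rw [Finset.mem_range]
    omega
  calc
    _ = ∑ a ∈ Finset.range (m / 2 + 1),
          if (c ≤ m ∧ 2 ∣ m - c) ∧ a = (m - c) / 2 then g c a else 0 :=
      Finset.sum_congr rfl fun a ha => ite_congr (propext (eq_sub_iff ha))
        (fun h => by rw [← (eq_sub_iff ha).2 h]) fun _ => rfl
    _ = _ := by
      simp_rw [ite_and _ (_ = _), Finset.sum_ite_irrel, Finset.sum_const_zero, Finset.sum_ite_eq',
        if_pos half_mem]

section Coefficients

open Polynomial

variable {R : Type*} [CommSemiring R]

theorem coeff_one_add_C_mul_X_pow (c : R) (N k : ℕ) :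
    ((1 + C c * X) ^ N).coeff k = c ^ k * N.choose k := by
  have comp_eq : (1 + C c * X) ^ N = ((1 + X) ^ N).comp (C c * X) := by simp
  rw [comp_eq, comp_C_mul_X_coeff, coeff_one_add_X_pow, mul_comm]

theorem coeff_one_add_X_sq_pow (N k : ℕ) :
    ((1 + X ^ 2 : R[X]) ^ N).coeff k = if 2 ∣ k then (N.choose (k / 2) : R) else 0 := by
  have expand_eq : (1 + X ^ 2 : R[X]) ^ N = expand R 2 ((1 + X) ^ N) := by simp
  rw [expand_eq, coeff_expand two_pos, coeff_one_add_X_pow]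

theorem coeff_prod_C_mul_X_add {ι : Type*} [Fintype ι] (a : ι → R) (f : R[X]) (k : ℕ) :
    (∏ j, (C (a j) * X + f)).coeff k =
      ∑ J : Finset ι, if J.card ≤ k then
        (∏ j ∈ J, a j) * (f ^ (Fintype.card ι - J.card)).coeff (k - J.card) else 0 := by
  classical
  simp_rw [Fintype.prod_add, finsetSum_coeff, Finset.prod_mul_distrib, ← map_prod,
    Finset.prod_const, Finset.card_compl, mul_assoc, coeff_C_mul, coeff_X_pow_mul', mul_ite,
    mul_zero]

theorem coeff_one_add_C_mul_X_mul (c : R) (P : R[X]) {l : ℕ} (hl : 1 ≤ l) :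
    ((1 + C c * X) * P).coeff l = P.coeff l + c * P.coeff (l - 1) := by
  obtain ⟨l, rfl⟩ := Nat.exists_eq_add_of_le' hl
  rw [add_mul, one_mul, mul_assoc, coeff_add, coeff_C_mul, coeff_X_mul, Nat.add_sub_cancel]

theorem coeff_one_sub_C_mul_X_add_X_sq_mul {S : Type*} [CommRing S] (c : S) (P : S[X])
    {k : ℕ} (hk : 1 ≤ k) :
    ((1 - C c * X + X ^ 2) * P).coeff k =
      P.coeff k - c * P.coeff (k - 1) + if 2 ≤ k then P.coeff (k - 2) else 0 := by
  obtain ⟨k, rfl⟩ := Nat.exists_eq_add_of_le' hk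
  rw [add_mul, sub_mul, one_mul, mul_assoc, coeff_add, coeff_sub, coeff_C_mul, coeff_X_mul,
    coeff_X_pow_mul', Nat.add_sub_cancel]

end Coefficients

section GeneratingPolynomials

open Polynomial

/-- The generating polynomial `∑_l 𝓗_l X^l` of the family `𝓗`, in factored form. -/
noncomputable def hPoly {ι : Type*} [Fintype ι] (q : ι → ℝ) : ℝ[X] :=
  ∏ j, (1 + C (4 * Real.sinh (q j / 2) ^ 2) * X)

/-- The generating polynomial `∑_m 𝓚_m X^m` of the family `𝓚`, in factored form. It is palindromic,
so read from either end it is the characteristic polynomial with eigenvalues `exp (± q_j)`. -/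
noncomputable def kPoly {ι : Type*} [Fintype ι] (q : ι → ℝ) : ℝ[X] :=
  ∏ j, (1 - C (2 * Real.cosh (q j)) * X + X ^ 2)

theorem four_mul_sinh_half_sq (x : ℝ) :
    4 * Real.sinh (x / 2) ^ 2 = 2 * Real.cosh x - 2 := by
  have cosh_eq := Real.cosh_two_mul (x / 2)
  rw [mul_div_cancel₀ x two_ne_zero, Real.cosh_sq] at cosh_eq
  linarith

theorem coeff_hPoly (n l : ℕ) (q : Fin n → ℝ) : (hPoly q).coeff l = Hfam n l q := by
  have hPoly_eq : hPoly q = ∏ j, (C (2 * Real.cosh (q j)) * X + (1 + C (-2) * X)) := by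
    refine Finset.prod_congr rfl fun j _ => ?_
    rw [four_mul_sinh_half_sq, sub_eq_add_neg, C_add]
    ring
  rw [hPoly_eq, coeff_prod_C_mul_X_add, Hfam]
  refine Finset.sum_congr rfl fun J _ => ?_
  rw [Finset.sum_ite_irrel, Finset.sum_const_zero, ← Finset.mul_sum, sum_cosh_signed_sum_coe,
    coeff_one_add_C_mul_X_pow, Fintype.card_fin, mul_comm]

theorem coeff_kPoly (n m : ℕ) (q : Fin n → ℝ) : (kPoly q).coeff m = Kfam n m q := by
  have kPoly_eq : kPoly q = ∏ j, (C (-(2 * Real.cosh (q j))) * X + (1 + X ^ 2)) := by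
    refine Finset.prod_congr rfl fun j _ => ?_
    rw [C_neg]
    ring
  rw [kPoly_eq, coeff_prod_C_mul_X_add, Kfam, Finset.sum_comm, Finset.mul_sum]
  refine Finset.sum_congr rfl fun J _ => ?_
  have neg_one_pow_eq (h : J.card ≤ m ∧ 2 ∣ m - J.card) : (-1 : ℝ) ^ m = (-1) ^ J.card :=
    neg_one_pow_congr (by grind)
  simp_rw [Finset.sum_ite_irrel, Finset.sum_const_zero, ← Finset.mul_sum,
    sum_cosh_signed_sum_coe]
  rw [sum_range_ite_eq_sub_two_mul _ _ fun c a =>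
      ((n - c).choose a : ℝ) * ∏ j ∈ J, 2 * Real.cosh (q j),
    Finset.prod_neg, coeff_one_add_X_sq_pow, Fintype.card_fin, ite_and]
  split_ifs with hle hdvd
  · rw [neg_one_pow_eq ⟨hle, hdvd⟩]
    ring
  all_goals simp

theorem hPoly_succAbove {n : ℕ} (q : Fin (n + 1) → ℝ) (p : Fin (n + 1)) :
    hPoly q = (1 + C (4 * Real.sinh (q p / 2) ^ 2) * X) * hPoly (q ∘ p.succAbove) :=
  Fin.prod_univ_succAbove _ p

theorem kPoly_succAbove {n : ℕ} (q : Fin (n + 1) → ℝ) (p : Fin (n + 1)) :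
    kPoly q = (1 - C (2 * Real.cosh (q p)) * X + X ^ 2) * kPoly (q ∘ p.succAbove) :=
  Fin.prod_univ_succAbove _ p

end GeneratingPolynomials

theorem stmt8_general (n : ℕ) (q : Fin (n + 1) → ℝ) (p : Fin (n + 1)) :
    (∀ l, 1 ≤ l →
      Hfam (n + 1) l q =
        Hfam n l (q ∘ p.succAbove) +
          4 * Real.sinh (q p / 2) ^ 2 * Hfam n (l - 1) (q ∘ p.succAbove)) ∧
      (∀ k, 1 ≤ k →
        Kfam (n + 1) k q =
          Kfam n k (q ∘ p.succAbove) -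
            2 * Real.cosh (q p) * Kfam n (k - 1) (q ∘ p.succAbove) +
            if 2 ≤ k then Kfam n (k - 2) (q ∘ p.succAbove) else 0) := by
  simp_rw [← coeff_hPoly, ← coeff_kPoly, hPoly_succAbove q p, kPoly_succAbove q p]
  exact ⟨fun _ hl => coeff_one_add_C_mul_X_mul _ _ hl,
    fun _ hk => coeff_one_sub_C_mul_X_add_X_sq_mul _ _ hk⟩

/-- The recursions (2.243) and (2.244) of the thesis for the families `𝓗` and `𝓚`,
with the conventions `𝓚₀ = 1` and `𝓚₋₁ = 0`. -/
theorem stmt8 (n : ℕ) (hn : 1 ≤ n) (q : Fin (n + 1) → ℝ) :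
    (∀ l, 1 ≤ l → l ≤ n →
      Hfam (n + 1) l q =
        Hfam n l (q ∘ Fin.castSucc) +
          4 * Real.sinh (q (Fin.last n) / 2) ^ 2 * Hfam n (l - 1) (q ∘ Fin.castSucc)) ∧
      (∀ k, 1 ≤ k → k ≤ n →
        Kfam (n + 1) k q =
          Kfam n k (q ∘ Fin.castSucc) -
            2 * Real.cosh (q (Fin.last n)) * Kfam n (k - 1) (q ∘ Fin.castSucc) +
            if 2 ≤ k then Kfam n (k - 2) (q ∘ Fin.castSucc) else 0) := by
  have recursion := stmt8_general n q (Fin.last n)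
  rw [Fin.succAbove_last] at recursion
  exact ⟨fun l hl _ => recursion.1 l hl, fun k hk _ => recursion.2 k hk⟩
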